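/- arXiv:math/0403467 — 2 statements merged into one kernel-verified Lean document; each statement's English description precedes it below -/
import Mathlib

section
/- Let A and B be real n×n stable matrices and suppose that A − B has rank one. Then there exists a common quadratic Lyapunov function for A and B (i.e. a real symmetric positive definite matrix P with P·A + Aᵀ·P negative definite and P·B + Bᵀ·P negative definite) if and only if the matrix A·B has no real negative eigenvalue, i.e. there is no real λ < 0 and nonzero x ∈ ℝⁿ with A·B·x = λ·x. -/
open Matrix

/-- A real square matrix is *stable* if every eigenvalue (over ℂ) has negative real part. -/
def IsStable {n : ℕ} (A : Matrix (Fin n) (Fin n) ℝ) : Prop :=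
  ∀ μ : ℂ, μ ∈ spectrum ℂ (A.map (algebraMap ℝ ℂ)) → μ.re < 0

/-- `(A,B)` has a common quadratic Lyapunov function: a real symmetric positive definite `P`
with `P·A + Aᵀ·P` and `P·B + Bᵀ·P` both negative definite. -/
def HasCQLF {n : ℕ} (A B : Matrix (Fin n) (Fin n) ℝ) : Prop :=
  ∃ P : Matrix (Fin n) (Fin n) ℝ,
    P.PosDef ∧ (-(P * A + Aᵀ * P)).PosDef ∧ (-(P * B + Bᵀ * P)).PosDef

/-!
If `P` is a CQLF and `A B x = λ x` with `λ < 0`, then `y = λ⁻¹ B x` satisfies `A y = x` and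
`B x = λ y`, so `yᵀ P A y` and `xᵀ P B x = λ yᵀ P A y` cannot both be negative.

Conversely, separating a compact convex set from `0` shows that a symmetric `P` with both Lyapunov
inequalities exists unless `A X + X Aᵀ + B Y + Y Bᵀ = 0` has a nonzero solution in positive
semidefinite matrices. Write `A - B = b cᵀ`, let `F` have independent columns with `F Fᴴ = X + Y`,
and compress `X = F X' Fᴴ`, `Y = F Y' Fᴴ`, so that `X' + Y' = 1`. The equation becomes
`A F = F S + b (cᵀ F Y')` with `S` skew-Hermitian. For a unit eigenvector `v` of `S` with eigenvalue
`iω`, the vector `F v` solves `A x = iω x + u b` with `u = cᵀ F Y' v`. The strict frequency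
condition `Re (1 + cᵀ (iω - A)⁻¹ b) > 0` gives `Re ((u - cᵀ F v) ū) > 0` unless `u = 0`, whereas the
sum of these numbers over an orthonormal eigenbasis is `-cᵀ F X' Y' Fᴴ c̄ ≤ 0`. Hence every `u`
vanishes, and stability of `A` forces `F v = 0`.

The frequency condition is where the spectrum of `A B` enters: its left side is the quotient
`det (ω² + A B) / det (ω² + A²)`, and both determinants are positive.

Finally, `P` is positive definite because `A` is stable: the same duality yields a positive definite
solution `P₀` of the Lyapunov inequality for `A`, and no `s P₀ + P` with `s ≥ 0` is singular.
-/

section LyapunovForm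

variable {n : Type*} [Fintype n] {P : Matrix n n ℝ}

lemma dotProduct_mulVec_comm_of_isHermitian (hP : P.IsHermitian) (x y : n → ℝ) :
    x ⬝ᵥ P *ᵥ y = y ⬝ᵥ P *ᵥ x := by
  have hPT : Pᵀ = P := by simpa using hP.eq
  rw [dotProduct_mulVec, ← mulVec_transpose, hPT, dotProduct_comm]

lemma dotProduct_lyapunov_mulVec (hP : P.IsHermitian) (C : Matrix n n ℝ) (x : n → ℝ) :
    x ⬝ᵥ (P * C + Cᵀ * P) *ᵥ x = 2 * (x ⬝ᵥ P *ᵥ C *ᵥ x) := by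
  rw [add_mulVec, dotProduct_add, ← mulVec_mulVec, ← mulVec_mulVec, dotProduct_mulVec x Cᵀ,
    vecMul_transpose, dotProduct_mulVec_comm_of_isHermitian hP (C *ᵥ x)]
  ring

lemma isHermitian_neg_lyapunov (hP : P.IsHermitian) (C : Matrix n n ℝ) :
    (-(P * C + Cᵀ * P)).IsHermitian := by
  have hPT : Pᵀ = P := by simpa using hP.eq
  simp [IsHermitian, conjTranspose_eq_transpose_of_trivial, hPT, add_comm]

lemma posDef_neg_lyapunov_iff (hP : P.IsHermitian) (C : Matrix n n ℝ) :
    (-(P * C + Cᵀ * P)).PosDef ↔ ∀ x ≠ 0, x ⬝ᵥ P *ᵥ C *ᵥ x < 0 := by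
  have hform (x : n → ℝ) :
      star x ⬝ᵥ (-(P * C + Cᵀ * P)) *ᵥ x = -2 * (x ⬝ᵥ P *ᵥ C *ᵥ x) := by
    rw [star_trivial, neg_mulVec, dotProduct_neg, dotProduct_lyapunov_mulVec hP]
    ring
  rw [posDef_iff_dotProduct_mulVec, and_iff_right (isHermitian_neg_lyapunov hP C)]
  refine forall₂_congr fun x _ => ?_
  rw [hform]
  constructor <;> intro h <;> linarith

end LyapunovForm

lemma HasCQLF.not_exists_neg_eigenvalue {n : ℕ} {A B : Matrix (Fin n) (Fin n) ℝ}
    (h : HasCQLF A B) :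
    ¬ ∃ lam : ℝ, lam < 0 ∧ ∃ x : Fin n → ℝ, x ≠ 0 ∧ (A * B).mulVec x = lam • x := by
  rintro ⟨lam, hlam, x, hx, hABx⟩
  obtain ⟨P, hP, hPA, hPB⟩ := h
  rw [posDef_neg_lyapunov_iff hP.isHermitian] at hPA hPB
  set y := lam⁻¹ • B *ᵥ x with hy
  have hBx : B *ᵥ x = lam • y := by rw [hy, smul_smul, mul_inv_cancel₀ hlam.ne, one_smul]
  have hAy : A *ᵥ y = x := by
    rw [hy, mulVec_smul, mulVec_mulVec, hABx, smul_smul, inv_mul_cancel₀ hlam.ne, one_smul]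
  have hy0 : y ≠ 0 := fun h0 => hx (by rw [← hAy, h0, mulVec_zero])
  have hyx : y ⬝ᵥ P *ᵥ x < 0 := by simpa only [hAy] using hPA y hy0
  have hxy : lam * (y ⬝ᵥ P *ᵥ x) < 0 := by
    simpa only [hBx, mulVec_smul, dotProduct_smul, smul_eq_mul,
      dotProduct_mulVec_comm_of_isHermitian hP.isHermitian x] using hPB x hx
  exact hxy.not_ge (mul_nonneg_of_nonpos_of_nonpos hlam.le hyx.le)

lemma abs_apply_le_trace_of_posSemidef {n : Type*} [Fintype n] {X : Matrix n n ℝ}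
    (hX : X.PosSemidef) (i j : n) : |X i j| ≤ X.trace := by
  classical
  have hdiag (k : n) : X k k ≤ X.trace :=
    Finset.single_le_sum (f := fun k => X k k) (fun l _ => hX.diag_nonneg) (Finset.mem_univ k)
  have hsymm : X j i = X i j := by simpa using hX.isHermitian.apply i j
  have hform (s : ℝ) : 0 ≤ X i i + s * X i j + (s * X j i + s * (s * X j j)) := by
    have := hX.dotProduct_mulVec_nonneg (Pi.single i 1 + Pi.single j s)
    simp only [star_trivial, mulVec_add, mulVec_single, add_dotProduct, dotProduct_add,
      single_dotProduct, Pi.smul_apply, col_apply, MulOpposite.smul_eq_mul_unop,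
      MulOpposite.unop_op, mul_one, one_mul] at this
    linarith
  rw [abs_le]
  constructor <;> linarith [hform 1, hform (-1), hdiag i, hdiag j]

/-- The compact base of the cone of families of positive semidefinite matrices, cut out by
normalizing the total trace to one. -/
def posSemidefFamilies (ι n : Type*) [Fintype ι] [Fintype n] : Set (ι → Matrix n n ℝ) :=
  {X | (∀ i, (X i).PosSemidef) ∧ ∑ i, (X i).trace = 1}

/-- The adjoint of the Lyapunov map `P ↦ (P * A i + (A i)ᵀ * P)ᵢ` of a family of matrices, with
respect to the trace pairing. -/
def lyapunovAdjoint {ι n : Type*} [Fintype ι] [Fintype n] (A : ι → Matrix n n ℝ) :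
    (ι → Matrix n n ℝ) →ₗ[ℝ] Matrix n n ℝ where
  toFun X := ∑ i, (A i * X i + X i * (A i)ᵀ)
  map_add' X Y := by
    simp only [Pi.add_apply, Matrix.mul_add, Matrix.add_mul, ← Finset.sum_add_distrib]
    exact Finset.sum_congr rfl fun i _ => by abel
  map_smul' r X := by
    simp only [Pi.smul_apply, Matrix.mul_smul, Matrix.smul_mul, ← smul_add, ← Finset.smul_sum,
      RingHom.id_apply]

lemma isClosed_setOf_posSemidef {n : Type*} [Finite n] :
    IsClosed {X : Matrix n n ℝ | X.PosSemidef} := by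
  have := Fintype.ofFinite n
  simp only [posSemidef_iff_dotProduct_mulVec, IsHermitian, Set.ofPred_and, Set.ofPred_forall]
  refine IsClosed.inter (isClosed_eq (by fun_prop) continuous_id) (isClosed_iInter fun x => ?_)
  exact isClosed_le continuous_const (by fun_prop)

section Separation

variable {ι n : Type*} [Fintype ι] [Fintype n]

lemma convex_posSemidefFamilies : Convex ℝ (posSemidefFamilies ι n) := by
  rintro X ⟨hX, hX1⟩ Y ⟨hY, hY1⟩ a b ha hb hab
  refine ⟨fun i => ((hX i).smul ha).add ((hY i).smul hb), ?_⟩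
  simp only [Pi.add_apply, Pi.smul_apply, trace_add, trace_smul, Finset.sum_add_distrib,
    smul_eq_mul, ← Finset.mul_sum, hX1, hY1, mul_one, hab]

lemma sum_trace_pos {X : ι → Matrix n n ℝ} (hX : ∀ i, (X i).PosSemidef) {k : ι} (hk : X k ≠ 0) :
    0 < ∑ i, (X i).trace :=
  Finset.sum_pos' (fun i _ => (hX i).trace_nonneg) ⟨k, Finset.mem_univ k,
    (hX k).trace_nonneg.lt_of_ne' fun h0 => hk ((hX k).trace_eq_zero_iff.1 h0)⟩

lemma inv_sum_trace_smul_mem_posSemidefFamilies {X : ι → Matrix n n ℝ}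
    (hX : ∀ i, (X i).PosSemidef) {k : ι} (hk : X k ≠ 0) :
    (∑ i, (X i).trace)⁻¹ • X ∈ posSemidefFamilies ι n := by
  have hpos := sum_trace_pos hX hk
  refine ⟨fun i => (hX i).smul (inv_nonneg.2 hpos.le), ?_⟩
  simp only [Pi.smul_apply, trace_smul, smul_eq_mul, ← Finset.mul_sum, inv_mul_cancel₀ hpos.ne']

lemma isClosed_posSemidefFamilies : IsClosed (posSemidefFamilies ι n) := by
  have hpsd : IsClosed {X : ι → Matrix n n ℝ | ∀ i, (X i).PosSemidef} := by
    simp only [Set.ofPred_forall]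
    exact isClosed_iInter fun i =>
      isClosed_setOf_posSemidef.preimage (f := fun X : ι → Matrix n n ℝ => X i) (by fun_prop)
  have htrace : IsClosed {X : ι → Matrix n n ℝ | ∑ i, (X i).trace = 1} :=
    isClosed_eq (by fun_prop) continuous_const
  exact hpsd.inter htrace

attribute [local instance] Matrix.normedAddCommGroup Matrix.normedSpace

lemma isCompact_posSemidefFamilies : IsCompact (posSemidefFamilies ι n) := by
  refine Metric.isCompact_of_isClosed_isBounded isClosed_posSemidefFamilies ?_
  refine isBounded_iff_forall_norm_le.2 ⟨1, fun X hX => ?_⟩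
  have htrace (k : ι) : (X k).trace ≤ 1 := hX.2 ▸
    Finset.single_le_sum (fun l _ => (hX.1 l).trace_nonneg) (Finset.mem_univ k)
  refine (pi_norm_le_iff_of_nonneg zero_le_one).2 fun k =>
    (norm_le_iff zero_le_one).2 fun i j => ?_
  exact (abs_apply_le_trace_of_posSemidef (hX.1 k) i j).trans (htrace k)

lemma exists_linearMap_pos_of_lyapunovAdjoint {A : ι → Matrix n n ℝ}
    (h : ∀ X : ι → Matrix n n ℝ, (∀ i, (X i).PosSemidef) → lyapunovAdjoint A X = 0 → X = 0) :
    ∃ f : Matrix n n ℝ →ₗ[ℝ] ℝ, ∀ X : ι → Matrix n n ℝ, (∀ i, (X i).PosSemidef) → X ≠ 0 →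
      0 < f (lyapunovAdjoint A X) := by
  have : LocallyConvexSpace ℝ (Matrix n n ℝ) :=
    inferInstanceAs (LocallyConvexSpace ℝ (n → n → ℝ))
  have hclosed : IsClosed (lyapunovAdjoint A '' posSemidefFamilies ι n) :=
    (isCompact_posSemidefFamilies.image
      (LinearMap.continuous_of_finiteDimensional (lyapunovAdjoint A))).isClosed
  have hzero : 0 ∉ lyapunovAdjoint A '' posSemidefFamilies ι n := by
    rintro ⟨X, ⟨hX, hX1⟩, hX0⟩
    simp [h X hX hX0] at hX1
  obtain ⟨f, u, hu, hf⟩ := geometric_hahn_banach_point_closed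
    (convex_posSemidefFamilies.linear_image (lyapunovAdjoint A)) hclosed hzero
  rw [map_zero] at hu
  refine ⟨f, fun X hX hX0 => ?_⟩
  obtain ⟨k, hk⟩ := Function.ne_iff.1 hX0
  have hpos := hu.trans (hf _ ⟨_, inv_sum_trace_smul_mem_posSemidefFamilies hX hk, rfl⟩)
  rw [map_smul, map_smul, smul_eq_mul] at hpos
  exact pos_of_mul_pos_right hpos (inv_nonneg.2 (sum_trace_pos hX hk).le)

end Separation

lemma exists_forall_map_vecMulVec {n : Type*} [Fintype n] {R : Type*} [CommSemiring R]
    (f : Matrix n n R →ₗ[R] R) :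
    ∃ G : Matrix n n R, ∀ x y : n → R, f (vecMulVec x y) = x ⬝ᵥ G *ᵥ y := by
  classical
  refine ⟨of fun i j => f (single i j 1), fun x y => ?_⟩
  conv_lhs => rw [matrix_eq_sum_single (vecMulVec x y)]
  simp only [map_sum, dotProduct, mulVec, Finset.mul_sum, of_apply]
  refine Finset.sum_congr rfl fun i _ => Finset.sum_congr rfl fun j _ => ?_
  rw [← mul_one (vecMulVec x y i j), ← smul_eq_mul, ← smul_single, map_smul, smul_eq_mul,
    vecMulVec_apply, mul_assoc, mul_comm (y j)]

theorem exists_lyapunov_of_dual {ι n : Type*} [Fintype ι] [Fintype n] {A : ι → Matrix n n ℝ}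
    (h : ∀ X : ι → Matrix n n ℝ, (∀ i, (X i).PosSemidef) →
      ∑ i, (A i * X i + X i * (A i)ᵀ) = 0 → X = 0) :
    ∃ P : Matrix n n ℝ, P.IsHermitian ∧ ∀ i, (-(P * A i + (A i)ᵀ * P)).PosDef := by
  classical
  obtain ⟨f, hf⟩ := exists_linearMap_pos_of_lyapunovAdjoint h
  obtain ⟨G, hG⟩ := exists_forall_map_vecMulVec f
  have hP : (-(G + Gᵀ)).IsHermitian := by
    simp [IsHermitian, conjTranspose_eq_transpose_of_trivial, add_comm]
  refine ⟨-(G + Gᵀ), hP, fun i => (posDef_neg_lyapunov_iff hP _).2 fun x hx => ?_⟩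
  have hsingle : lyapunovAdjoint A (Pi.single i (vecMulVec x x))
      = vecMulVec (A i *ᵥ x) x + vecMulVec x (A i *ᵥ x) := by
    rw [← mul_vecMulVec, ← vecMul_transpose, ← vecMulVec_mul]
    refine (Finset.sum_eq_single i (fun j _ hj => ?_) (by simp)).trans ?_
    · simp [hj]
    · simp
  have hpos : 0 < f (lyapunovAdjoint A (Pi.single i (vecMulVec x x))) := by
    refine hf _ (fun j => ?_) (by simpa using hx)
    obtain rfl | hj := eq_or_ne j i
    · simpa using posSemidef_vecMulVec_self_star x
    · simpa [hj] using PosSemidef.zero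
  rw [hsingle, map_add, hG, hG] at hpos
  have htranspose : x ⬝ᵥ Gᵀ *ᵥ A i *ᵥ x = (A i *ᵥ x) ⬝ᵥ G *ᵥ x := by
    rw [mulVec_transpose, dotProduct_comm, ← dotProduct_mulVec]
  rw [neg_mulVec, dotProduct_neg, add_mulVec, dotProduct_add, htranspose]
  linarith

section Factorization

open scoped ComplexOrder

variable {𝕜 m n : Type*} [RCLike 𝕜] [Fintype n]

lemma mul_eq_zero_of_posSemidef_of_conjTranspose_mul_mul_eq_zero {Z : Matrix n n 𝕜}
    (hZ : Z.PosSemidef) {N : Matrix n m 𝕜} (hN : Nᴴ * Z * N = 0) : Z * N = 0 := by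
  ext i j
  have hform : star (N.col j) ⬝ᵥ Z *ᵥ N.col j = 0 := by
    rw [dotProduct_mulVec]
    exact congr_fun (congr_fun hN j) j
  exact congr_fun ((hZ.dotProduct_mulVec_zero_iff _).1 hform) i

open scoped MatrixOrder in
lemma mul_eq_zero_of_posSemidef_of_add_mul_eq_zero [Finite m] {X Y : Matrix n n 𝕜}
    (hX : X.PosSemidef) (hY : Y.PosSemidef) {N : Matrix n m 𝕜} (hN : (X + Y) * N = 0) :
    Y * N = 0 := by
  have := Fintype.ofFinite m
  refine mul_eq_zero_of_posSemidef_of_conjTranspose_mul_mul_eq_zero hY ?_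
  have hsum : Nᴴ * X * N + Nᴴ * Y * N = 0 := by
    rw [← Matrix.add_mul, ← Matrix.mul_add, Matrix.mul_assoc, hN, Matrix.mul_zero]
  exact ((add_eq_zero_iff_of_nonneg (hX.conjTranspose_mul_mul_same N).nonneg
    (hY.conjTranspose_mul_mul_same N).nonneg).1 hsum).2

lemma exists_mul_conjTranspose_eq_of_posSemidef [DecidableEq n] {Z : Matrix n n 𝕜}
    (hZ : Z.PosSemidef) :
    ∃ (s : Finset n) (F : Matrix n s 𝕜) (G : Matrix s n 𝕜), G * F = 1 ∧ F * Fᴴ = Z := by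
  have hH := hZ.isHermitian
  set U : Matrix n n 𝕜 := (hH.eigenvectorUnitary).1
  have hUU : Uᴴ * U = 1 := Unitary.coe_star_mul_self hH.eigenvectorUnitary
  set d : n → 𝕜 := fun k => (Real.sqrt (hH.eigenvalues k) : 𝕜)
  have hdd (k : n) : d k * star (d k) = (hH.eigenvalues k : 𝕜) := by
    simp [d, ← RCLike.ofReal_mul, Real.mul_self_sqrt (hZ.eigenvalues_nonneg k)]
  have hZd : U * diagonal d * (U * diagonal d)ᴴ = Z := by
    conv_rhs => rw [hH.spectral_theorem, Unitary.conjStarAlgAut_apply]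
    rw [conjTranspose_mul, diagonal_conjTranspose, Matrix.mul_assoc U, ← Matrix.mul_assoc _ _ Uᴴ,
      diagonal_mul_diagonal, ← Matrix.mul_assoc]
    congr 3
    exact funext hdd
  have hinv : diagonal d⁻¹ * Uᴴ * (U * diagonal d) = diagonal (d⁻¹ * d) := by
    rw [Matrix.mul_assoc, ← Matrix.mul_assoc Uᴴ, hUU, Matrix.one_mul, diagonal_mul_diagonal]
    rfl
  let s : Finset n := {k | d k ≠ 0}
  have hs {k : n} : k ∈ s ↔ d k ≠ 0 := by simp [s]
  refine ⟨s, (U * diagonal d).submatrix id (↑), (diagonal d⁻¹ * Uᴴ).submatrix (↑) id, ?_, ?_⟩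
  · rw [← submatrix_mul _ _ _ _ _ Function.bijective_id, hinv]
    ext k l
    have hk : d k ≠ 0 := hs.1 k.2
    simp [diagonal_apply, one_apply, hk]
  · conv_rhs => rw [← hZd]
    ext i j
    simp only [mul_apply (M := submatrix _ _ _), mul_apply (N := (U * diagonal d)ᴴ),
      conjTranspose_apply, submatrix_apply, id_eq]
    rw [Finset.sum_coe_sort s fun k => (U * diagonal d) i k * star ((U * diagonal d) j k)]
    refine Finset.sum_subset (Finset.subset_univ s) fun k _ hk => ?_
    have hk0 : d k = 0 := by simpa using mt hs.2 hk
    simp [hk0]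

lemma exists_compression_of_posSemidef_pair [DecidableEq n] {X Y : Matrix n n 𝕜}
    (hX : X.PosSemidef) (hY : Y.PosSemidef) :
    ∃ (s : Finset n) (F : Matrix n s 𝕜) (G : Matrix s n 𝕜) (X' Y' : Matrix s s 𝕜),
      G * F = 1 ∧ X'.PosSemidef ∧ Y'.PosSemidef ∧ X' + Y' = 1 ∧
        F * X' * Fᴴ = X ∧ F * Y' * Fᴴ = Y := by
  obtain ⟨s, F, G, hGF, hF⟩ := exists_mul_conjTranspose_eq_of_posSemidef (hX.add hY)
  have hFG : Fᴴ * Gᴴ = 1 := by rw [← conjTranspose_mul, hGF, conjTranspose_one]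
  have hker : (X + Y) * (1 - Gᴴ * Fᴴ) = 0 := by
    rw [← hF, Matrix.mul_sub, Matrix.mul_one, Matrix.mul_assoc F, ← Matrix.mul_assoc Fᴴ, hFG,
      Matrix.one_mul, sub_self]
  have hcompress {W : Matrix n n 𝕜} (hW : W.PosSemidef) (hW0 : W * (1 - Gᴴ * Fᴴ) = 0) :
      F * (G * W * Gᴴ) * Fᴴ = W := by
    have hright : W * (Gᴴ * Fᴴ) = W := by
      rwa [Matrix.mul_sub, Matrix.mul_one, sub_eq_zero, eq_comm] at hW0
    have hleft : F * G * W = W := by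
      simpa only [conjTranspose_mul, conjTranspose_conjTranspose, hW.isHermitian.eq] using
        congr_arg conjTranspose hright
    rw [Matrix.mul_assoc G, ← Matrix.mul_assoc F, Matrix.mul_assoc, Matrix.mul_assoc W, hright,
      hleft]
  refine ⟨s, F, G, G * X * Gᴴ, G * Y * Gᴴ, hGF, hX.mul_mul_conjTranspose_same G,
    hY.mul_mul_conjTranspose_same G, ?_, ?_, ?_⟩
  · rw [← Matrix.add_mul, ← Matrix.mul_add, ← hF, ← Matrix.mul_assoc, hGF, Matrix.one_mul, hFG]
  · exact hcompress hX
      (mul_eq_zero_of_posSemidef_of_add_mul_eq_zero hY hX (by rwa [add_comm Y]))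
  · exact hcompress hY (mul_eq_zero_of_posSemidef_of_add_mul_eq_zero hX hY hker)

lemma posSemidef_mul_of_add_eq_one [DecidableEq n] {X Y : Matrix n n 𝕜} (hX : X.PosSemidef)
    (hY : Y.PosSemidef) (hXY : X + Y = 1) : (X * Y).PosSemidef := by
  have hcomm : X * Y = Y * X := by
    rw [← eq_sub_iff_add_eq] at hXY
    rw [hXY, Matrix.sub_mul, Matrix.mul_sub, Matrix.one_mul, Matrix.mul_one]
  have hsplit : X * Y = X * Y * Xᴴ + Y * X * Yᴴ := by
    rw [hX.isHermitian.eq, hY.isHermitian.eq, ← hcomm, ← Matrix.mul_add, hXY, Matrix.mul_one]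
  rw [hsplit]
  exact (hY.mul_mul_conjTranspose_same X).add (hX.mul_mul_conjTranspose_same Y)

lemma eq_mul_mul_of_posSemidef [Fintype m] [DecidableEq m] {F L : Matrix n m 𝕜} {G : Matrix m n 𝕜}
    (hGF : G * F = 1) (hL : (L * Fᴴ + F * Lᴴ).PosSemidef) : L = F * (G * L) := by
  classical
  set N := 1 - F * G with hN
  have hNF : N * F = 0 := by
    rw [hN, Matrix.sub_mul, Matrix.one_mul, Matrix.mul_assoc, hGF, Matrix.mul_one, sub_self]
  have hFN : Fᴴ * Nᴴ = 0 := by rw [← conjTranspose_mul, hNF, conjTranspose_zero]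
  have hform : Nᴴᴴ * (L * Fᴴ + F * Lᴴ) * Nᴴ = 0 := by
    rw [conjTranspose_conjTranspose, Matrix.mul_add, ← Matrix.mul_assoc N F, hNF, Matrix.zero_mul,
      add_zero, Matrix.mul_assoc, Matrix.mul_assoc, hFN, Matrix.mul_zero, Matrix.mul_zero]
  have hrange := mul_eq_zero_of_posSemidef_of_conjTranspose_mul_mul_eq_zero hL hform
  rw [Matrix.add_mul, Matrix.mul_assoc, hFN, Matrix.mul_zero, zero_add, Matrix.mul_assoc] at hrange
  have hNL : N * L = 0 := by
    rw [← conjTranspose_eq_zero, conjTranspose_mul, ← Matrix.one_mul (Lᴴ * Nᴴ), ← hGF,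
      Matrix.mul_assoc, hrange, Matrix.mul_zero]
  rwa [hN, Matrix.sub_mul, Matrix.one_mul, sub_eq_zero, Matrix.mul_assoc] at hNL

end Factorization

lemma mul_add_conjTranspose_mul {R m n : Type*} [Semiring R] [StarRing R] [Fintype m] [Fintype n]
    [DecidableEq m] {F L : Matrix n m R} {G : Matrix m n R} (hGF : G * F = 1) :
    G * L + (G * L)ᴴ = G * (L * Fᴴ + F * Lᴴ) * Gᴴ := by
  have hFG : Fᴴ * Gᴴ = 1 := by rw [← conjTranspose_mul, hGF, conjTranspose_one]
  rw [Matrix.mul_add, Matrix.add_mul, ← Matrix.mul_assoc G F, hGF, Matrix.one_mul,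
    Matrix.mul_assoc G, Matrix.mul_assoc L, hFG, Matrix.mul_one, conjTranspose_mul]

section Dual

open scoped ComplexOrder

variable {m n : Type*} [Fintype m] [Fintype n]

lemma exists_orthonormalBasis_of_conjTranspose_eq_neg {S : Matrix m m ℂ} (hS : Sᴴ = -S) :
    ∃ (v : OrthonormalBasis m ℂ (EuclideanSpace ℂ m)) (ω : m → ℝ),
      ∀ k, S *ᵥ v k = (ω k * Complex.I) • ⇑(v k) := by
  classical
  have hIS : (Complex.I • S).IsHermitian := by simp [IsHermitian, conjTranspose_smul, hS]
  refine ⟨hIS.eigenvectorBasis, fun k => -hIS.eigenvalues k, fun k => ?_⟩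
  have hv := congr_arg ((-Complex.I) • ·) (hIS.mulVec_eigenvectorBasis k)
  simp only [smul_mulVec, smul_smul, neg_mul, Complex.I_mul_I, neg_neg, one_smul] at hv
  rw [hv]
  ext i
  simp [mul_assoc, mul_left_comm]

lemma sum_dotProduct_orthonormalBasis_mul_star
    (v : OrthonormalBasis m ℂ (EuclideanSpace ℂ m)) (a b : m → ℂ) :
    ∑ k, (a ⬝ᵥ v k) * star (b ⬝ᵥ v k) = a ⬝ᵥ star b := by
  have h := v.sum_inner_mul_inner (WithLp.toLp 2 (star a)) (WithLp.toLp 2 (star b))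
  simp only [EuclideanSpace.inner_eq_star_dotProduct, star_star] at h
  rw [dotProduct_comm, ← h]
  refine Finset.sum_congr rfl fun k _ => ?_
  rw [star_dotProduct_star, dotProduct_comm a, dotProduct_comm b]

/-- The strict frequency condition `0 < Re (1 + cᴴ (iω - A)⁻¹ b)` for all real `ω`, where
`x = -(iω - A)⁻¹ b` is given by the equation it solves. -/
def StrictFrequencyCondition (A : Matrix n n ℂ) (b c : n → ℂ) : Prop :=
  ∀ (ω : ℝ) (x : n → ℂ), A *ᵥ x = (ω * Complex.I) • x + b → 0 < (1 - star c ⬝ᵥ x).re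

variable {A B : Matrix n n ℂ} {b c : n → ℂ}

lemma StrictFrequencyCondition.re_pos (h : StrictFrequencyCondition A b c) {ω : ℝ} {x : n → ℂ}
    {u : ℂ} (hu : u ≠ 0) (hx : A *ᵥ x = (ω * Complex.I) • x + u • b) :
    0 < ((u - star c ⬝ᵥ x) * star u).re := by
  have hx' : A *ᵥ (u⁻¹ • x) = (ω * Complex.I) • (u⁻¹ • x) + b := by
    rw [mulVec_smul, hx, smul_add, smul_smul u⁻¹ u, inv_mul_cancel₀ hu, one_smul, smul_comm]
  have hscale : (u - star c ⬝ᵥ x) * star u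
      = (Complex.normSq u : ℂ) * (1 - star c ⬝ᵥ (u⁻¹ • x)) := by
    rw [dotProduct_smul, Complex.normSq_eq_conj_mul_self, smul_eq_mul, Complex.star_def]
    field_simp
  rw [hscale, Complex.re_ofReal_mul]
  exact mul_pos (Complex.normSq_pos.2 hu) (h ω _ hx')

lemma sum_dotProduct_sub_mul_star_eq_neg {X Y : Matrix m m ℂ} [DecidableEq m] (hY : Y.IsHermitian)
    (hXY : X + Y = 1) (v : OrthonormalBasis m ℂ (EuclideanSpace ℂ m)) (a : m → ℂ) :
    ∑ k, (((a ᵥ* Y) ⬝ᵥ v k - a ⬝ᵥ v k) * star ((a ᵥ* Y) ⬝ᵥ v k))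
      = -(a ⬝ᵥ (X * Y) *ᵥ star a) := by
  have hX : a ᵥ* Y - a = -(a ᵥ* X) := by
    rw [← eq_sub_iff_add_eq'] at hXY
    rw [hXY, vecMul_sub, vecMul_one, sub_sub_cancel_left]
  have hstar : star (a ᵥ* Y) = Y *ᵥ star a := by rw [star_vecMul, hY.eq]
  simp only [← sub_dotProduct, hX]
  rw [sum_dotProduct_orthonormalBasis_mul_star, hstar, neg_dotProduct, ← dotProduct_mulVec,
    mulVec_mulVec]

theorem isEmpty_of_strictFrequencyCondition [DecidableEq m]
    (hA : ∀ (ω : ℝ) (x : n → ℂ), A *ᵥ x = (ω * Complex.I) • x → x = 0)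
    (hfreq : StrictFrequencyCondition A b c) {F : Matrix n m ℂ} {G : Matrix m n ℂ}
    (hGF : G * F = 1) {S X Y : Matrix m m ℂ} (hS : Sᴴ = -S) (hX : X.PosSemidef)
    (hY : Y.PosSemidef) (hXY : X + Y = 1)
    (hAF : A * F = F * S + vecMulVec b (star c ᵥ* F ᵥ* Y)) : IsEmpty m := by
  obtain ⟨v, ω, hv⟩ := exists_orthonormalBasis_of_conjTranspose_eq_neg hS
  set a := star c ᵥ* F
  have heigen (k : m) : A *ᵥ F *ᵥ v k = (ω k * Complex.I) • (F *ᵥ v k)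
      + ((a ᵥ* Y) ⬝ᵥ v k) • b := by
    rw [mulVec_mulVec, hAF, add_mulVec, ← mulVec_mulVec, hv, mulVec_smul, vecMulVec_mulVec]
    ext i
    simp [mul_comm]
  have hpos (k : m) (hk : (a ᵥ* Y) ⬝ᵥ v k ≠ 0) :
      0 < (((a ᵥ* Y) ⬝ᵥ v k - a ⬝ᵥ v k) * star ((a ᵥ* Y) ⬝ᵥ v k)).re := by
    rw [← dotProduct_mulVec (star c)]
    exact hfreq.re_pos hk (heigen k)
  have hnonneg (k : m) : 0 ≤ (((a ᵥ* Y) ⬝ᵥ v k - a ⬝ᵥ v k) * star ((a ᵥ* Y) ⬝ᵥ v k)).re := by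
    obtain hk | hk := eq_or_ne ((a ᵥ* Y) ⬝ᵥ v k) 0
    · simp [hk]
    · exact (hpos k hk).le
  have hsum : ∑ k, (((a ᵥ* Y) ⬝ᵥ v k - a ⬝ᵥ v k) * star ((a ᵥ* Y) ⬝ᵥ v k)).re ≤ 0 := by
    have hform := (posSemidef_mul_of_add_eq_one hX hY hXY).dotProduct_mulVec_nonneg (star a)
    rw [star_star] at hform
    rw [← Complex.re_sum, sum_dotProduct_sub_mul_star_eq_neg hY.isHermitian hXY, Complex.neg_re]
    exact neg_nonpos.2 (Complex.le_def.1 hform).1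
  have hzero := (Finset.sum_eq_zero_iff_of_nonneg fun k _ => hnonneg k).1
    (hsum.antisymm (Finset.sum_nonneg fun k _ => hnonneg k))
  refine ⟨fun k => v.orthonormal.ne_zero k ?_⟩
  have hk : (a ᵥ* Y) ⬝ᵥ v k = 0 := not_imp_comm.1 (hpos k) (hzero k (Finset.mem_univ k)).not_gt
  have hFv : F *ᵥ v k = 0 := hA (ω k) _ (by rw [heigen, hk, zero_smul, add_zero])
  have hvk : ⇑(v k) = 0 := by rw [← one_mulVec ⇑(v k), ← hGF, ← mulVec_mulVec, hFv, mulVec_zero]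
  ext i
  exact congr_fun hvk i

theorem eq_zero_of_strictFrequencyCondition
    (hA : ∀ (ω : ℝ) (x : n → ℂ), A *ᵥ x = (ω * Complex.I) • x → x = 0)
    (hfreq : StrictFrequencyCondition A b c) (hbc : A - B = vecMulVec b (star c))
    {X Y : Matrix n n ℂ} (hX : X.PosSemidef) (hY : Y.PosSemidef)
    (hXY : A * X + X * Aᴴ + (B * Y + Y * Bᴴ) = 0) : X = 0 ∧ Y = 0 := by
  classical
  obtain ⟨s, F, G, X', Y', hGF, hX', hY', hsum, rfl, rfl⟩ :=
    exists_compression_of_posSemidef_pair hX hY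
  set L := A * F * X' + B * F * Y' with hL
  have hLF : L * Fᴴ + F * Lᴴ = 0 := by
    rw [← hXY, hL]
    simp only [conjTranspose_add, conjTranspose_mul, hX'.isHermitian.eq, hY'.isHermitian.eq,
      Matrix.mul_add, Matrix.add_mul, Matrix.mul_assoc]
    abel
  have hLS := eq_mul_mul_of_posSemidef hGF (hLF ▸ PosSemidef.zero)
  have hskew : (G * L)ᴴ = -(G * L) := by
    apply eq_neg_of_add_eq_zero_right
    rw [mul_add_conjTranspose_mul hGF, hLF, Matrix.mul_zero, Matrix.zero_mul]
  have hAF : A * F = F * (G * L) + vecMulVec b (star c ᵥ* F ᵥ* Y') := by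
    rw [← hLS, hL, ← vecMulVec_mul, ← vecMulVec_mul, ← hbc, Matrix.sub_mul, Matrix.sub_mul]
    rw [add_add_sub_cancel, ← Matrix.mul_add, hsum, Matrix.mul_one]
  have := isEmpty_of_strictFrequencyCondition hA hfreq hGF hskew hX' hY' hsum hAF
  constructor <;> ext <;> simp [mul_apply]

end Dual

section FrequencyCondition

lemma det_smul_one_add_pos {n : Type*} [Fintype n] [DecidableEq n] {M : Matrix n n ℝ}
    (h : ∀ t : ℝ, 0 ≤ t → IsUnit (t • 1 + M)) {t : ℝ} (ht : 0 ≤ t) : 0 < (t • 1 + M).det := by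
  have heval (s : ℝ) : (-M).charpoly.eval s = (s • 1 + M).det := by
    rw [eval_charpoly, sub_neg_eq_add, scalar_apply, smul_one_eq_diagonal]
  rw [← heval]
  refine Polynomial.zero_lt_eval_of_roots_lt_of_leadingCoeff_nonneg (fun y hy => ?_) ?_
  · by_contra! hty
    rw [Polynomial.IsRoot, heval] at hy
    exact ((isUnit_iff_isUnit_det _).1 (h y (ht.trans hty))).ne_zero hy
  · rw [(charpoly_monic _).leadingCoeff]
    exact zero_le_one

section CommRing

variable {R n : Type*} [CommRing R] [Fintype n] [DecidableEq n]

lemma det_one_sub_vecMulVec (u v : n → R) : (1 - vecMulVec u v).det = 1 - v ⬝ᵥ u := by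
  rw [sub_eq_add_neg, ← neg_vecMulVec, vecMulVec_eq (Fin 1),
    det_one_add_replicateCol_mul_replicateRow, dotProduct_neg, sub_eq_add_neg]

/-- The hypotheses on `p` and `q` are the real and imaginary parts of `A x = iω x + b` for
`x = p + iq`. -/
lemma smul_one_add_mul_eq_mul_one_sub_vecMulVec {A B : Matrix n n R} {b c p q : n → R} {ω : R}
    (hbc : A - B = vecMulVec b c) (hp : A *ᵥ p = -(ω • q) + b) (hq : A *ᵥ q = ω • p) :
    (ω * ω) • 1 + A * B = ((ω * ω) • 1 + A * A) * (1 - vecMulVec p c) := by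
  have hb : ((ω * ω) • 1 + A * A) *ᵥ p = A *ᵥ b := by
    rw [add_mulVec, smul_mulVec, one_mulVec, ← mulVec_mulVec, hp, mulVec_add, mulVec_neg,
      mulVec_smul, hq, smul_smul, add_neg_cancel_left]
  rw [Matrix.mul_sub, Matrix.mul_one, mul_vecMulVec, hb, ← mul_vecMulVec, ← hbc, Matrix.mul_sub]
  abel

end CommRing

lemma strictFrequencyCondition_of_isUnit {n : Type*} [Fintype n] [DecidableEq n]
    {A B : Matrix n n ℝ} {b c : n → ℝ} (hbc : A - B = vecMulVec b c)
    (hA : ∀ t : ℝ, 0 ≤ t → IsUnit (t • 1 + A * A))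
    (hAB : ∀ t : ℝ, 0 ≤ t → IsUnit (t • 1 + A * B)) :
    StrictFrequencyCondition (A.map (algebraMap ℝ ℂ)) (algebraMap ℝ ℂ ∘ b)
      (algebraMap ℝ ℂ ∘ c) := by
  intro ω x hx
  have hp : A *ᵥ (fun i => (x i).re) = -(ω • fun i => (x i).im) + b := by
    ext i
    simpa [mulVec, dotProduct] using congr_arg Complex.re (congr_fun hx i)
  have hq : A *ᵥ (fun i => (x i).im) = ω • fun i => (x i).re := by
    ext i
    simpa [mulVec, dotProduct] using congr_arg Complex.im (congr_fun hx i)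
  have hdet := congr_arg det (smul_one_add_mul_eq_mul_one_sub_vecMulVec hbc hp hq)
  rw [det_mul, det_one_sub_vecMulVec] at hdet
  have hpos : 0 < 1 - c ⬝ᵥ fun i => (x i).re :=
    pos_of_mul_pos_right (hdet ▸ det_smul_one_add_pos hAB (mul_self_nonneg ω))
      (det_smul_one_add_pos hA (mul_self_nonneg ω)).le
  simpa [dotProduct] using hpos

end FrequencyCondition

section Complexification

open scoped ComplexOrder

lemma isUnit_map_ringHom_iff {K L n : Type*} [Field K] [Field L] [Fintype n] [DecidableEq n]
    (f : K →+* L) {M : Matrix n n K} : IsUnit (M.map f) ↔ IsUnit M := by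
  rw [isUnit_iff_isUnit_det, isUnit_iff_isUnit_det, ← f.mapMatrix_apply, ← f.map_det,
    isUnit_map_iff]

variable {𝕜 n : Type*} [RCLike 𝕜]

lemma eq_zero_of_map_algebraMap {X : Matrix n n ℝ} (hX : X.map (algebraMap ℝ 𝕜) = 0) : X = 0 :=
  map_injective (algebraMap ℝ 𝕜).injective (hX.trans (Matrix.map_zero _ (map_zero _)).symm)

lemma posSemidef_map_algebraMap [Finite n] {X : Matrix n n ℝ} (hX : X.PosSemidef) :
    (X.map (algebraMap ℝ 𝕜)).PosSemidef := by
  obtain ⟨m, v, rfl⟩ := posSemidef_iff_eq_sum_vecMulVec.1 hX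
  refine posSemidef_iff_eq_sum_vecMulVec.2 ⟨m, fun i k => algebraMap ℝ 𝕜 (v i k), ?_⟩
  ext i j
  simp [Matrix.sum_apply, vecMulVec_apply]

lemma map_algebraMap_mul_add_mul_transpose [Fintype n] (A X : Matrix n n ℝ) :
    (A * X + X * Aᵀ).map (algebraMap ℝ 𝕜) = A.map (algebraMap ℝ 𝕜) * X.map (algebraMap ℝ 𝕜)
      + X.map (algebraMap ℝ 𝕜) * (A.map (algebraMap ℝ 𝕜))ᴴ := by
  have hT : (A.map (algebraMap ℝ 𝕜))ᴴ = Aᵀ.map (algebraMap ℝ 𝕜) := by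
    ext i j
    simp
  rw [hT, ← Matrix.map_mul, ← Matrix.map_mul, Matrix.map_add _ (map_add _)]

end Complexification

namespace IsStable

variable {n : ℕ} {A : Matrix (Fin n) (Fin n) ℝ}

lemma isUnit_smul_one_sub (hA : IsStable A) {μ : ℂ} (hμ : 0 ≤ μ.re) :
    IsUnit (μ • 1 - A.map (algebraMap ℝ ℂ)) := by
  rw [← Algebra.algebraMap_eq_smul_one]
  exact spectrum.notMem_iff.1 fun h => (hA μ h).not_ge hμ

lemma eq_zero_of_mulVec_eq_smul (hA : IsStable A) {μ : ℂ} (hμ : 0 ≤ μ.re) {x : Fin n → ℂ}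
    (hx : A.map (algebraMap ℝ ℂ) *ᵥ x = μ • x) : x = 0 := by
  refine mulVec_injective_iff_isUnit.2 (hA.isUnit_smul_one_sub hμ) ?_
  rw [sub_mulVec, smul_mulVec, one_mulVec, hx, sub_self, mulVec_zero]

lemma isUnit_smul_one_add_mul_self (hA : IsStable A) {t : ℝ} (ht : 0 ≤ t) :
    IsUnit (t • 1 + A * A) := by
  set z : ℂ := Real.sqrt t * Complex.I
  have hz : z * z = -t := by
    rw [mul_mul_mul_comm, Complex.I_mul_I, ← Complex.ofReal_mul, Real.mul_self_sqrt ht, mul_neg_one]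
  have hfac : (t • 1 + A * A).map (algebraMap ℝ ℂ)
      = (z • 1 - A.map (algebraMap ℝ ℂ)) * ((-z) • 1 - A.map (algebraMap ℝ ℂ)) := by
    have hmap : (t • 1 + A * A).map (algebraMap ℝ ℂ)
        = (t : ℂ) • 1 + A.map (algebraMap ℝ ℂ) * A.map (algebraMap ℝ ℂ) := by
      ext i j
      simp [mul_apply, one_apply, apply_ite]
    rw [hmap, ← neg_eq_iff_eq_neg.2 hz]
    simp only [sub_mul, mul_sub, smul_mul_assoc, mul_smul_comm, one_mul, mul_one]
    module
  rw [← isUnit_map_ringHom_iff (algebraMap ℝ ℂ), hfac]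
  exact (hA.isUnit_smul_one_sub (by simp [z])).mul (hA.isUnit_smul_one_sub (by simp [z]))

lemma isUnit (hA : IsStable A) : IsUnit A := by
  have h := hA.isUnit_smul_one_add_mul_self le_rfl
  rw [zero_smul, zero_add] at h
  exact isUnit_of_mul_isUnit_left h

end IsStable

lemma isUnit_smul_one_add_of_not_exists_neg_eigenvalue {K n : Type*} [Field K]
    [LinearOrder K] [IsStrictOrderedRing K] [Fintype n] [DecidableEq n]
    {M : Matrix n n K} (hM : IsUnit M)
    (h : ¬ ∃ lam : K, lam < 0 ∧ ∃ x : n → K, x ≠ 0 ∧ M *ᵥ x = lam • x) {t : K} (ht : 0 ≤ t) :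
    IsUnit (t • 1 + M) := by
  obtain rfl | ht := ht.eq_or_lt
  · rwa [zero_smul, zero_add]
  · by_contra hunit
    rw [isUnit_iff_isUnit_det, isUnit_iff_ne_zero, not_not] at hunit
    obtain ⟨x, hx, hMx⟩ := exists_mulVec_eq_zero_iff.2 hunit
    rw [add_mulVec, smul_mulVec, one_mulVec] at hMx
    exact h ⟨-t, neg_neg_of_pos ht, x, hx, by rw [neg_smul, eq_neg_of_add_eq_zero_right hMx]⟩

section Lyapunov

open scoped ComplexOrder

lemma re_nonneg_of_posSemidef_add_conjTranspose {𝕜 n : Type*} [RCLike 𝕜] [Fintype n]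
    {S : Matrix n n 𝕜} (hS : (S + Sᴴ).PosSemidef) {μ : 𝕜} {v : n → 𝕜} (hv : v ≠ 0)
    (hSv : S *ᵥ v = μ • v) : 0 ≤ RCLike.re μ := by
  have hform : star v ⬝ᵥ (S + Sᴴ) *ᵥ v = (2 * RCLike.re μ : ℝ) * (star v ⬝ᵥ v) := by
    have hadd : μ + star μ = (2 * RCLike.re μ : ℝ) := by
      rw [RCLike.star_def, RCLike.add_conj, RCLike.ofReal_mul, RCLike.ofReal_ofNat]
    rw [add_mulVec, dotProduct_add, dotProduct_mulVec _ Sᴴ, ← star_mulVec, hSv, star_smul,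
      dotProduct_smul, smul_dotProduct, smul_eq_mul, smul_eq_mul, ← add_mul, hadd]
  have hre := (RCLike.nonneg_iff.1 (hform ▸ hS.dotProduct_mulVec_nonneg v)).1
  rw [RCLike.re_ofReal_mul] at hre
  have hpos := (RCLike.pos_iff.1 (dotProduct_star_self_pos_iff.2 hv)).1
  exact nonneg_of_mul_nonneg_right (nonneg_of_mul_nonneg_left hre hpos) two_pos

lemma eq_zero_of_posSemidef_mul_add_mul_conjTranspose {n : Type*} [Fintype n]
    {A X : Matrix n n ℂ} (hA : ∀ μ : ℂ, 0 ≤ μ.re → ∀ x, A *ᵥ x = μ • x → x = 0)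
    (hX : X.PosSemidef) (hAX : (A * X + X * Aᴴ).PosSemidef) : X = 0 := by
  classical
  obtain ⟨s, F, G, hGF, rfl⟩ := exists_mul_conjTranspose_eq_of_posSemidef hX
  have hL : (A * F * Fᴴ + F * (A * F)ᴴ).PosSemidef := by
    rwa [conjTranspose_mul, Matrix.mul_assoc A, ← Matrix.mul_assoc F]
  have hAF := eq_mul_mul_of_posSemidef hGF hL
  have hS : (G * (A * F) + (G * (A * F))ᴴ).PosSemidef := by
    rw [mul_add_conjTranspose_mul hGF]
    exact hL.mul_mul_conjTranspose_same G
  obtain hs | hs := isEmpty_or_nonempty s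
  · ext
    simp [mul_apply]
  · obtain ⟨μ, hμ⟩ := Module.End.exists_eigenvalue (toLin' (G * (A * F)))
    obtain ⟨v, hv⟩ := hμ.exists_hasEigenvector
    have hSv : (G * (A * F)) *ᵥ v = μ • v := hv.apply_eq_smul
    have hFv : F *ᵥ v = 0 := by
      refine hA μ (re_nonneg_of_posSemidef_add_conjTranspose hS hv.2 hSv) _ ?_
      rw [mulVec_mulVec, hAF, ← mulVec_mulVec, hSv, mulVec_smul]
    refine absurd ?_ hv.2
    rw [← one_mulVec v, ← hGF, ← mulVec_mulVec, hFv, mulVec_zero]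

open scoped MatrixOrder Matrix.Norms.L2Operator in
lemma posDef_of_forall_smul_add_mulVec_ne_zero {𝕜 n : Type*} [RCLike 𝕜] [Fintype n]
    {P P₀ : Matrix n n 𝕜} (hP : P.IsHermitian) (hP₀ : P₀.PosDef)
    (h : ∀ s : ℝ, 0 ≤ s → ∀ x ≠ 0, ((s : 𝕜) • P₀ + P) *ᵥ x ≠ 0) : P.PosDef := by
  classical
  obtain ⟨R, hR, rfl⟩ :=
    CStarAlgebra.isStrictlyPositive_iff_eq_star_mul_self.1 hP₀.isStrictlyPositive
  lift R to (Matrix n n 𝕜)ˣ using hR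
  set M : Matrix n n 𝕜 := star (↑R⁻¹ : Matrix n n 𝕜) * P * (↑R⁻¹ : Matrix n n 𝕜) with hM
  have hMH : M.IsHermitian := isHermitian_conjTranspose_mul_mul _ hP
  rw [← IsUnit.posDef_star_left_conjugate_iff R⁻¹.isUnit, ← hM, hMH.posDef_iff_eigenvalues_pos]
  intro i
  by_contra! hi
  set v := hMH.eigenvectorBasis i
  have hRv : (R : Matrix n n 𝕜) *ᵥ (↑R⁻¹ : Matrix n n 𝕜) *ᵥ ⇑v = v := by
    rw [mulVec_mulVec, R.mul_inv, one_mulVec]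
  have hPv : P *ᵥ (↑R⁻¹ : Matrix n n 𝕜) *ᵥ ⇑v
      = (hMH.eigenvalues i : 𝕜) • (star (R : Matrix n n 𝕜) *ᵥ ⇑v) := by
    have hRM : star (R : Matrix n n 𝕜) * M = P * (↑R⁻¹ : Matrix n n 𝕜) := by
      rw [hM, ← mul_assoc, ← mul_assoc, ← star_mul, R.inv_mul, star_one, one_mul]
    rw [mulVec_mulVec, ← hRM, ← mulVec_mulVec, hMH.mulVec_eigenvectorBasis,
      RCLike.real_smul_eq_coe_smul (K := 𝕜), mulVec_smul]
  refine h (-hMH.eigenvalues i) (neg_nonneg.2 hi) ((↑R⁻¹ : Matrix n n 𝕜) *ᵥ ⇑v) (fun h0 => ?_) ?_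
  · refine hMH.eigenvectorBasis.orthonormal.ne_zero i ?_
    ext j
    rw [h0, mulVec_zero] at hRv
    exact congr_fun hRv.symm j
  · rw [add_mulVec, smul_mulVec, ← mulVec_mulVec, hRv, hPv, RCLike.ofReal_neg, neg_smul,
      neg_add_cancel]

namespace IsStable

variable {n : ℕ} {A P : Matrix (Fin n) (Fin n) ℝ}

lemma exists_posDef_lyapunov (hA : IsStable A) :
    ∃ P : Matrix (Fin n) (Fin n) ℝ, P.PosDef ∧ (-(P * A + Aᵀ * P)).PosDef := by
  obtain ⟨P, hP, hPA⟩ := exists_lyapunov_of_dual (A := ![A, -1]) fun X hX hsum => by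
    have hsum' : A * X 0 + X 0 * Aᵀ = X 1 + X 1 := by
      rw [← sub_eq_zero, ← hsum, Fin.sum_univ_two]
      simp only [cons_val_zero, cons_val_one, neg_mul, one_mul, transpose_neg, transpose_one,
        mul_neg, mul_one]
      abel
    have hX0 : X 0 = 0 := by
      refine eq_zero_of_map_algebraMap (eq_zero_of_posSemidef_mul_add_mul_conjTranspose
        (fun μ hμ x => hA.eq_zero_of_mulVec_eq_smul hμ) (posSemidef_map_algebraMap (hX 0)) ?_)
      rw [← map_algebraMap_mul_add_mul_transpose, hsum']
      exact posSemidef_map_algebraMap ((hX 1).add (hX 1))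
    have hX1 : X 1 = 0 := by
      rw [hX0, Matrix.mul_zero, Matrix.zero_mul, add_zero] at hsum'
      rwa [← two_smul ℝ, eq_comm, smul_eq_zero_iff_right two_ne_zero] at hsum'
    exact funext (Fin.forall_fin_two.2 ⟨hX0, hX1⟩)
  refine ⟨P, posDef_iff_dotProduct_mulVec.2 ⟨hP, fun x hx => ?_⟩, hPA 0⟩
  have hneg : x ⬝ᵥ P *ᵥ (-1) *ᵥ x < 0 := (posDef_neg_lyapunov_iff hP _).1 (hPA 1) x hx
  rwa [neg_mulVec, one_mulVec, mulVec_neg, dotProduct_neg, neg_lt_zero] at hneg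

lemma posDef_of_posDef_neg_lyapunov (hA : IsStable A) (hP : P.IsHermitian)
    (hPA : (-(P * A + Aᵀ * P)).PosDef) : P.PosDef := by
  obtain ⟨P₀, hP₀, hP₀A⟩ := hA.exists_posDef_lyapunov
  rw [posDef_neg_lyapunov_iff hP] at hPA
  rw [posDef_neg_lyapunov_iff hP₀.isHermitian] at hP₀A
  refine posDef_of_forall_smul_add_mulVec_ne_zero hP hP₀ fun s hs x hx hsx => ?_
  have hPs : (s • P₀ + P).IsHermitian := (hP₀.isHermitian.smul (.all s)).add hP
  have hzero : x ⬝ᵥ (s • P₀ + P) *ᵥ A *ᵥ x = 0 := by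
    rw [dotProduct_mulVec_comm_of_isHermitian hPs]
    simpa using congr_arg (A *ᵥ x ⬝ᵥ ·) hsx
  rw [add_mulVec, smul_mulVec, dotProduct_add, dotProduct_smul, smul_eq_mul] at hzero
  exact (add_neg_of_nonpos_of_neg (mul_nonpos_of_nonneg_of_nonpos hs (hP₀A x hx).le)
    (hPA x hx)).ne hzero

end IsStable

end Lyapunov

lemma IsStable.eq_zero_of_isUnit_smul_one_add_mul {n : ℕ} {A B : Matrix (Fin n) (Fin n) ℝ}
    {b c : Fin n → ℝ} (hA : IsStable A) (hAB : ∀ t : ℝ, 0 ≤ t → IsUnit (t • 1 + A * B))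
    (hbc : A - B = vecMulVec b c) {X Y : Matrix (Fin n) (Fin n) ℝ} (hX : X.PosSemidef)
    (hY : Y.PosSemidef) (hXY : A * X + X * Aᵀ + (B * Y + Y * Bᵀ) = 0) : X = 0 ∧ Y = 0 := by
  have hfreq := strictFrequencyCondition_of_isUnit hbc
    (fun _ => hA.isUnit_smul_one_add_mul_self) hAB
  have hbc' : A.map (algebraMap ℝ ℂ) - B.map (algebraMap ℝ ℂ)
      = vecMulVec (algebraMap ℝ ℂ ∘ b) (star (algebraMap ℝ ℂ ∘ c)) := by
    rw [← Matrix.map_sub _ (map_sub _), hbc]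
    ext i j
    simp [vecMulVec_apply]
  have hXY' := congr_arg (fun M => M.map (algebraMap ℝ ℂ)) hXY
  rw [Matrix.map_add _ (map_add _), map_algebraMap_mul_add_mul_transpose,
    map_algebraMap_mul_add_mul_transpose, Matrix.map_zero _ (map_zero _)] at hXY'
  exact (eq_zero_of_strictFrequencyCondition
    (fun ω x hx => hA.eq_zero_of_mulVec_eq_smul (by simp) hx) hfreq hbc'
    (posSemidef_map_algebraMap hX) (posSemidef_map_algebraMap hY) hXY').imp
    eq_zero_of_map_algebraMap eq_zero_of_map_algebraMap

lemma exists_eq_vecMulVec_of_rank_le_one {K m n : Type*} [Field K] [Finite m] [Fintype n]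
    {M : Matrix m n K} (hM : M.rank ≤ 1) : ∃ b c, M = vecMulVec b c := by
  classical
  obtain ⟨b, hb⟩ := ((Submodule.finrank_le_one_iff_isPrincipal _).1 hM).principal
  have (j : n) : ∃ r : K, r • b = M.col j := by
    rw [← Submodule.mem_span_singleton, ← hb]
    exact ⟨Pi.single j 1, by simp⟩
  choose c hc using this
  refine ⟨b, c, ?_⟩
  ext i j
  simpa [vecMulVec_apply, mul_comm] using (congr_fun (hc j) i).symm

theorem shorten_narendra_general {n : ℕ} (A B : Matrix (Fin n) (Fin n) ℝ)
    (hA : IsStable A) (hB : IsUnit B) (hrank : (A - B).rank ≤ 1) :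
    HasCQLF A B ↔
      ¬ ∃ lam : ℝ, lam < 0 ∧ ∃ x : Fin n → ℝ, x ≠ 0 ∧ (A * B).mulVec x = lam • x := by
  refine ⟨HasCQLF.not_exists_neg_eigenvalue, fun h => ?_⟩
  obtain ⟨b, c, hbc⟩ := exists_eq_vecMulVec_of_rank_le_one hrank
  have hAB (t : ℝ) (ht : 0 ≤ t) : IsUnit (t • 1 + A * B) :=
    isUnit_smul_one_add_of_not_exists_neg_eigenvalue (hA.isUnit.mul hB) h ht
  obtain ⟨P, hP, hPAB⟩ := exists_lyapunov_of_dual (A := ![A, B]) fun X hX hsum =>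
    funext (Fin.forall_fin_two.2 (hA.eq_zero_of_isUnit_smul_one_add_mul hAB hbc (hX 0) (hX 1)
      (by simpa using hsum)))
  exact ⟨P, hA.posDef_of_posDef_neg_lyapunov hP (hPAB 0), hPAB 0, hPAB 1⟩

/-- **Shorten–Narendra theorem.** For stable `A`, `B` with `A - B` of rank one, a CQLF exists
iff `A·B` has no real negative eigenvalue. -/
theorem shorten_narendra {n : ℕ} (A B : Matrix (Fin n) (Fin n) ℝ)
    (hA : IsStable A) (hB : IsStable B) (hrank : (A - B).rank = 1) :
    HasCQLF A B ↔
      ¬ ∃ lam : ℝ, lam < 0 ∧ ∃ x : Fin n → ℝ, x ≠ 0 ∧ (A * B).mulVec x = lam • x :=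
  shorten_narendra_general A B hA hB.isUnit hrank.le
end

section
/- Let Z₁, …, Z_m be real symmetric n×n matrices, μ₁, …, μ_m real numbers, and set Z = Σᵢ μᵢ·Zᵢ. Assume rank(Z) = Σᵢ rank(Zᵢ). Let v₁, …, v_m ∈ ℝⁿ with each vᵢ in the range of Zᵢ, and set v = Σᵢ μᵢ·vᵢ. Then ⟨v, Z⁺·v⟩ = Σᵢ μᵢ·⟨vᵢ, Zᵢ⁺·vᵢ⟩, where M⁺ denotes the Moore–Penrose pseudoinverse of M. -/
/-!
The map `x ↦ ∑ μᵢ Zᵢ x` factors through `x ↦ (Zᵢ x)ᵢ ∈ ∏ range Zᵢ`, whose target has dimension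
`∑ rank Zᵢ`. Rank additivity therefore makes `x ↦ (Zᵢ x)ᵢ` surjective, so the `vᵢ ∈ range Zᵢ` have
a common preimage `x`, and dually row vectors `uᵢ = y Zᵢ` have a common `y`. With `u = ∑ μᵢ uᵢ`,
the identities `Z P Z = Z` and `Zᵢ Pᵢ Zᵢ = Zᵢ` turn both `u P v` and `∑ μᵢ uᵢ Pᵢ vᵢ` into `y Z x`;
for symmetric `Zᵢ` one takes `u = v`.
-/

open Matrix

/-- `P` is the Moore–Penrose pseudoinverse of `M` (the four Penrose conditions). -/
def IsMoorePenroseInv {n : ℕ} (M P : Matrix (Fin n) (Fin n) ℝ) : Prop :=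
  M * P * M = M ∧ P * M * P = P ∧ (M * P)ᵀ = M * P ∧ (P * M)ᵀ = P * M

section CommonPreimage

variable {K V U ι : Type*} {W : ι → Type*} [DivisionRing K] [AddCommGroup V] [Module K V]
  [AddCommGroup U] [Module K U] [∀ i, AddCommGroup (W i)] [∀ i, Module K (W i)] [Fintype ι]

theorem surjective_pi_rangeRestrict_of_finrank_range_comp_eq_sum (f : ∀ i, V →ₗ[K] W i)
    [∀ i, FiniteDimensional K (LinearMap.range (f i))] (s : (∀ i, W i) →ₗ[K] U)
    (hrank : Module.finrank K (LinearMap.range (s ∘ₗ LinearMap.pi f)) =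
      ∑ i, Module.finrank K (LinearMap.range (f i))) :
    Function.Surjective (LinearMap.pi fun i => (f i).rangeRestrict) := by
  let r : V →ₗ[K] ∀ i, LinearMap.range (f i) := LinearMap.pi fun i => (f i).rangeRestrict
  let incl : (∀ i, LinearMap.range (f i)) →ₗ[K] ∀ i, W i :=
    LinearMap.pi fun i => (LinearMap.range (f i)).subtype ∘ₗ LinearMap.proj i
  have factor : s ∘ₗ LinearMap.pi f = (s ∘ₗ incl) ∘ₗ r := rfl
  refine LinearMap.range_eq_top.mp <| Submodule.eq_top_of_finrank_eq <|
    (Submodule.finrank_le _).antisymm ?_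
  calc Module.finrank K (∀ i, LinearMap.range (f i))
      = ∑ i, Module.finrank K (LinearMap.range (f i)) := Module.finrank_pi_fintype K
    _ = Module.finrank K ((LinearMap.range r).map (s ∘ₗ incl)) := by
        rw [← hrank, factor, LinearMap.range_comp]
    _ ≤ Module.finrank K (LinearMap.range r) := Submodule.finrank_map_le _ _

end CommonPreimage

section RankAdditive

variable {K ι m n : Type*} [Field K] [Fintype ι] [Fintype n] (A : ι → Matrix m n K) (μ : ι → K)

theorem exists_forall_mulVec_eq_of_rank_sum_smul_eq
    (hrank : (∑ i, μ i • A i).rank = ∑ i, (A i).rank)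
    {v : ι → m → K} (hv : ∀ i, ∃ y, A i *ᵥ y = v i) :
    ∃ y, ∀ i, A i *ᵥ y = v i := by
  let s : (ι → m → K) →ₗ[K] m → K := ∑ i, μ i • LinearMap.proj i
  have hsum : (∑ i, μ i • A i).mulVecLin = s ∘ₗ LinearMap.pi fun i => (A i).mulVecLin := by
    ext1 x
    simp [s]
  have hsurj := surjective_pi_rangeRestrict_of_finrank_range_comp_eq_sum
    (fun i => (A i).mulVecLin) s (by rw [← hsum]; exact hrank)
  obtain ⟨y, hy⟩ := hsurj fun i => ⟨v i, hv i⟩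
  exact ⟨y, fun i => congrArg Subtype.val (congrFun hy i)⟩

theorem exists_forall_vecMul_eq_of_rank_sum_smul_eq [Fintype m]
    (hrank : (∑ i, μ i • A i).rank = ∑ i, (A i).rank)
    {u : ι → n → K} (hu : ∀ i, ∃ x, x ᵥ* A i = u i) :
    ∃ x, ∀ i, x ᵥ* A i = u i := by
  simp only [← mulVec_transpose] at hu ⊢
  refine exists_forall_mulVec_eq_of_rank_sum_smul_eq (fun i => (A i)ᵀ) μ ?_ hu
  simpa only [← transpose_smul, ← transpose_sum, rank_transpose] using hrank

end RankAdditive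

theorem vecMul_dotProduct_mulVec_mulVec_of_mul_mul_eq {R m n : Type*} [Semiring R]
    [Fintype m] [Fintype n] {A : Matrix m n R} {P : Matrix n m R} (hP : A * P * A = A)
    (x : m → R) (y : n → R) : (x ᵥ* A) ⬝ᵥ P *ᵥ (A *ᵥ y) = x ⬝ᵥ A *ᵥ y := by
  rw [← dotProduct_mulVec, mulVec_mulVec, mulVec_mulVec, hP]

theorem pseudoinverse_quadratic_form_additive_general {K ι m n : Type*} [Field K] [Fintype ι]
    [Fintype m] [Fintype n] (A : ι → Matrix m n K) (μ : ι → K)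
    (hrank : (∑ i, μ i • A i).rank = ∑ i, (A i).rank)
    {P : Matrix n m K} (hP : (∑ i, μ i • A i) * P * (∑ i, μ i • A i) = ∑ i, μ i • A i)
    {Q : ι → Matrix n m K} (hQ : ∀ i, A i * Q i * A i = A i)
    {u : ι → n → K} (hu : ∀ i, ∃ x, x ᵥ* A i = u i)
    {v : ι → m → K} (hv : ∀ i, ∃ y, A i *ᵥ y = v i) :
    (∑ i, μ i • u i) ⬝ᵥ P *ᵥ (∑ i, μ i • v i) = ∑ i, μ i * (u i ⬝ᵥ Q i *ᵥ v i) := by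
  obtain ⟨x, hx⟩ := exists_forall_vecMul_eq_of_rank_sum_smul_eq A μ hrank hu
  obtain ⟨y, hy⟩ := exists_forall_mulVec_eq_of_rank_sum_smul_eq A μ hrank hv
  have hsum_u : ∑ i, μ i • u i = x ᵥ* ∑ i, μ i • A i := by
    simp only [vecMul_sum, vecMul_smul, hx]
  have hsum_v : ∑ i, μ i • v i = (∑ i, μ i • A i) *ᵥ y := by
    simp only [sum_mulVec, smul_mulVec, hy]
  calc (∑ i, μ i • u i) ⬝ᵥ P *ᵥ (∑ i, μ i • v i)
      = x ⬝ᵥ (∑ i, μ i • A i) *ᵥ y := by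
        rw [hsum_u, hsum_v, vecMul_dotProduct_mulVec_mulVec_of_mul_mul_eq hP]
    _ = ∑ i, μ i * (x ⬝ᵥ A i *ᵥ y) := by
        simp only [sum_mulVec, smul_mulVec, dotProduct_sum, dotProduct_smul, smul_eq_mul]
    _ = ∑ i, μ i * (u i ⬝ᵥ Q i *ᵥ v i) := by
        simp only [← hx, ← hy, vecMul_dotProduct_mulVec_mulVec_of_mul_mul_eq (hQ _)]

/-- **Inverse lemma.** If `Z = Σ μᵢ Zᵢ` with symmetric `Zᵢ` and `rank Z = Σ rank Zᵢ`, and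
`v = Σ μᵢ vᵢ` with each `vᵢ` in the range of `Zᵢ`, then
`⟨v, Z⁺v⟩ = Σ μᵢ ⟨vᵢ, Zᵢ⁺vᵢ⟩`. -/
theorem pseudoinverse_quadratic_form_additive {n m : ℕ}
    (Zs : Fin m → Matrix (Fin n) (Fin n) ℝ) (μ : Fin m → ℝ)
    (hsym : ∀ i, (Zs i).IsSymm)
    (Z : Matrix (Fin n) (Fin n) ℝ) (hZdef : Z = ∑ i, μ i • Zs i)
    (hrank : Z.rank = ∑ i, (Zs i).rank)
    (v : Fin m → Fin n → ℝ) (hv : ∀ i, ∃ y : Fin n → ℝ, (Zs i).mulVec y = v i)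
    (w : Fin n → ℝ) (hwdef : w = ∑ i, μ i • v i)
    (Zp : Matrix (Fin n) (Fin n) ℝ) (hZp : IsMoorePenroseInv Z Zp)
    (Zpi : Fin m → Matrix (Fin n) (Fin n) ℝ)
    (hZpi : ∀ i, IsMoorePenroseInv (Zs i) (Zpi i)) :
    w ⬝ᵥ Zp.mulVec w = ∑ i, μ i * (v i ⬝ᵥ (Zpi i).mulVec (v i)) := by
  subst hZdef hwdef
  exact pseudoinverse_quadratic_form_additive_general Zs μ hrank hZp.1 (fun i => (hZpi i).1)
    (fun i => by simpa only [← mulVec_transpose, (hsym i).eq] using hv i) hv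
end
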